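/- arXiv:1811.03188 — 2 statements merged into one kernel-verified Lean document; each statement's English description precedes it below -/
import Mathlib

section
/- Let A and B be real symmetric d×d matrices (d ≥ 3) with eigenvalues listed in nonincreasing order, and let P_A and P_B denote the orthogonal projections onto the span of eigenvectors corresponding to the top 2 eigenvalues of A and of B, respectively. If λ₂(A) − |λ₃(A)| − ‖A − B‖₂ > 0, then ‖(I − P_A) P_B‖₂ ≤ ‖A − B‖₂ / (λ₂(A) − |λ₃(A)| − ‖A − B‖₂). -/
open Matrix
open scoped Matrix.Norms.L2Operator
open ContinuousLinearMap Module Set Submodule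
open scoped InnerProductSpace

/-!
Let `P = P_A`, `R = P_B` and `X = (1 - P) R`. Compressing `A` to the range of `1 - P` and `B` to the
range of `R` gives operators `C` and `D` with `X D - C X = (1 - P) (B - A) R`, where `D ≥ λ₂(B)` and
`C ≤ λ₃(A)`. If `w` is a top right singular vector of `X`, then `X* X w = ‖X‖² w`, so
`Re ⟪(X D - C X) w, X w⟫ = ‖X‖² Re ⟪D w, w⟫ - Re ⟪C X w, X w⟫ ≥ (λ₂(B) - λ₃(A)) ‖X‖² ‖w‖²`,
which bounds `(λ₂(B) - λ₃(A)) ‖X‖` by `‖A - B‖`. Weyl's inequality then replaces `λ₂(B)` by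
`λ₂(A) - ‖A - B‖`. In infinite dimension, `w` is only a unit vector with `‖X w‖` close to `‖X‖`, and
`‖X* X w - ‖X‖² w‖` is correspondingly small.
-/

section Sylvester

variable {𝕜 F G : Type*} [RCLike 𝕜]
  [NormedAddCommGroup F] [InnerProductSpace 𝕜 F] [CompleteSpace F]
  [NormedAddCommGroup G] [InnerProductSpace 𝕜 G] [CompleteSpace G]

theorem norm_adjoint_apply_sub_smul_sq_le (X : F →L[𝕜] G) (w : F) :
    ‖X.adjoint (X w) - ((‖X‖ ^ 2 : ℝ) : 𝕜) • w‖ ^ 2 ≤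
      ‖X‖ ^ 2 * (‖X‖ ^ 2 * ‖w‖ ^ 2 - ‖X w‖ ^ 2) := by
  have hadj : ‖X.adjoint (X w)‖ ≤ ‖X‖ * ‖X w‖ := by
    simpa only [LinearIsometryEquiv.norm_map] using X.adjoint.le_opNorm (X w)
  have hinner : RCLike.re ⟪X.adjoint (X w), ((‖X‖ ^ 2 : ℝ) : 𝕜) • w⟫_𝕜 = ‖X‖ ^ 2 * ‖X w‖ ^ 2 := by
    rw [inner_smul_right, RCLike.re_ofReal_mul, adjoint_inner_left, inner_self_eq_norm_sq]
  have hsmul : ‖((‖X‖ ^ 2 : ℝ) : 𝕜) • w‖ = ‖X‖ ^ 2 * ‖w‖ := by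
    rw [norm_smul, RCLike.norm_of_nonneg (sq_nonneg _)]
  rw [norm_sub_sq (𝕜 := 𝕜), hinner, hsmul]
  linarith [pow_le_pow_left₀ (norm_nonneg _) hadj 2]

theorem mul_norm_sq_sub_le_of_reApplyInnerSelf_bounds {C : G →L[𝕜] G} {D : F →L[𝕜] F} {α β : ℝ}
    (hD : ∀ x, α * ‖x‖ ^ 2 ≤ D.reApplyInnerSelf x) (hC : ∀ y, C.reApplyInnerSelf y ≤ β * ‖y‖ ^ 2)
    (X : F →L[𝕜] G) {w : F} (hw : ‖w‖ = 1) :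
    α * ‖X‖ ^ 2 - β * ‖X w‖ ^ 2 ≤
      ‖X ∘L D - C ∘L X‖ * ‖X w‖ + ‖D‖ * √(‖X‖ ^ 2 * (‖X‖ ^ 2 - ‖X w‖ ^ 2)) := by
  set r : F := X.adjoint (X w) - ((‖X‖ ^ 2 : ℝ) : 𝕜) • w with hr
  have hr_norm : ‖r‖ ≤ √(‖X‖ ^ 2 * (‖X‖ ^ 2 - ‖X w‖ ^ 2)) := by
    simpa only [hw, one_pow, mul_one] using
      Real.le_sqrt_of_sq_le (norm_adjoint_apply_sub_smul_sq_le X w)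
  have hsplit : RCLike.re ⟪(X ∘L D - C ∘L X) w, X w⟫_𝕜 =
      ‖X‖ ^ 2 * D.reApplyInnerSelf w + RCLike.re ⟪D w, r⟫_𝕜 - C.reApplyInnerSelf (X w) := by
    simp only [hr, reApplyInnerSelf_apply, _root_.sub_apply, ContinuousLinearMap.comp_apply,
      inner_sub_left, inner_sub_right, inner_smul_right, adjoint_inner_right, map_sub,
      RCLike.re_ofReal_mul]
    ring
  have hres : RCLike.re ⟪(X ∘L D - C ∘L X) w, X w⟫_𝕜 ≤ ‖X ∘L D - C ∘L X‖ * ‖X w‖ := by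
    refine (re_inner_le_norm _ _).trans ?_
    gcongr
    exact unit_le_opNorm _ _ hw.le
  have herr : -(‖D‖ * √(‖X‖ ^ 2 * (‖X‖ ^ 2 - ‖X w‖ ^ 2))) ≤ RCLike.re ⟪D w, r⟫_𝕜 := by
    refine neg_le_of_abs_le <| (RCLike.abs_re_le_norm _).trans <| (norm_inner_le_norm _ _).trans ?_
    gcongr
    exact unit_le_opNorm _ _ hw.le
  have hDw : α ≤ D.reApplyInnerSelf w := by simpa [hw] using hD w
  linarith [hC (X w), mul_le_mul_of_nonneg_left hDw (sq_nonneg ‖X‖)]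

theorem sub_mul_norm_le_norm_comp_sub_comp {C : G →L[𝕜] G} {D : F →L[𝕜] F} {α β : ℝ}
    (hD : ∀ x, α * ‖x‖ ^ 2 ≤ D.reApplyInnerSelf x) (hC : ∀ y, C.reApplyInnerSelf y ≤ β * ‖y‖ ^ 2)
    (X : F →L[𝕜] G) : (α - β) * ‖X‖ ≤ ‖X ∘L D - C ∘L X‖ := by
  rcases eq_or_ne X 0 with rfl | hX
  · simp
  have : Nontrivial F := by
    obtain ⟨x, hx⟩ := DFunLike.ne_iff.mp hX
    exact nontrivial_of_ne x 0 fun h => hx (by simp [h])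
  have hmem : ‖X‖ ∈ closure ((fun w => ‖X w‖) '' Metric.sphere 0 1) := by
    rw [← X.sSup_sphere_eq_norm]
    refine csSup_mem_closure ((nonempty_coe_sort.mp
      (NormedSpace.sphere_nonempty_rclike 𝕜 zero_le_one)).image _) ⟨‖X‖, ?_⟩
    rintro _ ⟨w, hw, rfl⟩
    exact unit_le_opNorm _ _ (mem_sphere_zero_iff_norm.mp hw).le
  have hlim : α * ‖X‖ ^ 2 - β * ‖X‖ ^ 2 ≤
      ‖X ∘L D - C ∘L X‖ * ‖X‖ + ‖D‖ * √(‖X‖ ^ 2 * (‖X‖ ^ 2 - ‖X‖ ^ 2)) := by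
    refine closure_minimal (t := {t : ℝ | α * ‖X‖ ^ 2 - β * t ^ 2 ≤
      ‖X ∘L D - C ∘L X‖ * t + ‖D‖ * √(‖X‖ ^ 2 * (‖X‖ ^ 2 - t ^ 2))}) ?_
      (isClosed_le (by fun_prop) (by fun_prop)) hmem
    rintro _ ⟨w, hw, rfl⟩
    exact mul_norm_sq_sub_le_of_reApplyInnerSelf_bounds hD hC X (mem_sphere_zero_iff_norm.mp hw)
  refine le_of_mul_le_mul_right ?_ (norm_pos_iff.mpr hX)
  rw [sub_self, mul_zero, Real.sqrt_zero, mul_zero, add_zero] at hlim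
  linarith

end Sylvester

section Subspaces

variable {𝕜 E : Type*} [RCLike 𝕜] [NormedAddCommGroup E] [InnerProductSpace 𝕜 E]

/-- The compression of an operator `T` to a subspace `U`: apply `T` to a vector of `U`, then project
orthogonally back onto `U`. It is valued in `U` itself, so compressions to different subspaces act
on different Hilbert spaces. -/
noncomputable def compression (T : E →L[𝕜] E) (U : Submodule 𝕜 E) [U.HasOrthogonalProjection] :
    U →L[𝕜] U :=
  U.orthogonalProjectionOnto ∘L T ∘L U.subtypeL

theorem reApplyInnerSelf_compression (T : E →L[𝕜] E) (U : Submodule 𝕜 E)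
    [U.HasOrthogonalProjection] (x : U) :
    (compression T U).reApplyInnerSelf x = T.reApplyInnerSelf (x : E) := by
  simp [compression, reApplyInnerSelf_apply]

theorem sub_mul_norm_starProjection_comp_starProjection_le [CompleteSpace E] {S T : E →L[𝕜] E}
    {U W : Submodule 𝕜 E} [CompleteSpace U] [CompleteSpace W] {α β : ℝ}
    (hU : ∀ x ∈ U, S x ∈ U) (hW : ∀ x ∈ W, T x ∈ W)
    (hα : ∀ x ∈ W, α * ‖x‖ ^ 2 ≤ T.reApplyInnerSelf x)
    (hβ : ∀ x ∈ Uᗮ, S.reApplyInnerSelf x ≤ β * ‖x‖ ^ 2) :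
    (α - β) * ‖Uᗮ.starProjection ∘L W.starProjection‖ ≤ ‖S - T‖ := by
  rcases le_total α β with hαβ | hβα
  · exact (mul_nonpos_of_nonpos_of_nonneg (sub_nonpos.mpr hαβ) (norm_nonneg _)).trans
      (norm_nonneg _)
  let X : W →L[𝕜] Uᗮ := Uᗮ.orthogonalProjectionOnto ∘L W.subtypeL
  have hX : ‖Uᗮ.starProjection ∘L W.starProjection‖ ≤ ‖X‖ := by
    refine opNorm_le_bound _ (norm_nonneg _) fun x => ?_
    exact (X.le_opNorm _).trans <| by gcongr; exact W.norm_orthogonalProjectionOnto_apply_le x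
  have hdiff : X ∘L compression T W - compression S Uᗮ ∘L X =
      Uᗮ.orthogonalProjectionOnto ∘L (T - S) ∘L W.subtypeL := by
    ext x
    have hT : (W.orthogonalProjectionOnto (T x) : E) = T x :=
      starProjection_eq_self_iff.mpr (hW x x.2)
    have hS : Uᗮ.orthogonalProjectionOnto (S (U.starProjection x)) = 0 :=
      orthogonalProjectionOnto_orthogonal_apply_eq_zero (hU _ (U.starProjection_apply_mem _))
    simp [X, compression, hT, hS, starProjection_orthogonal_val]
  have hnorm : ‖X ∘L compression T W - compression S Uᗮ ∘L X‖ ≤ ‖S - T‖ := by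
    rw [hdiff, norm_sub_rev]
    refine opNorm_le_bound _ (norm_nonneg _) fun x => ?_
    exact (Uᗮ.norm_orthogonalProjectionOnto_apply_le _).trans ((T - S).le_opNorm x)
  calc (α - β) * ‖Uᗮ.starProjection ∘L W.starProjection‖
      ≤ (α - β) * ‖X‖ := mul_le_mul_of_nonneg_left hX (sub_nonneg.mpr hβα)
    _ ≤ ‖X ∘L compression T W - compression S Uᗮ ∘L X‖ :=
      sub_mul_norm_le_norm_comp_sub_comp
        (fun x => by rw [reApplyInnerSelf_compression]; exact hα x x.2)
        (fun y => by rw [reApplyInnerSelf_compression]; exact hβ y y.2) X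
    _ ≤ ‖S - T‖ := hnorm

theorem sub_le_norm_sub_of_finrank_lt [FiniteDimensional 𝕜 E] {S T : E →L[𝕜] E}
    {U W : Submodule 𝕜 E} {α β : ℝ} (hα : ∀ x ∈ U, α * ‖x‖ ^ 2 ≤ S.reApplyInnerSelf x)
    (hβ : ∀ x ∈ Wᗮ, T.reApplyInnerSelf x ≤ β * ‖x‖ ^ 2) (hWU : finrank 𝕜 W < finrank 𝕜 U) :
    α - β ≤ ‖S - T‖ := by
  have hmeet : ¬ Disjoint U Wᗮ := fun h => by
    have := finrank_add_finrank_le_of_disjoint h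
    have := W.finrank_add_finrank_orthogonal
    omega
  obtain ⟨x, ⟨hxU, hxW⟩, hx⟩ := Submodule.exists_mem_ne_zero_of_ne_bot (disjoint_iff.not.mp hmeet)
  have hdiff : S.reApplyInnerSelf x - T.reApplyInnerSelf x ≤ ‖S - T‖ * ‖x‖ ^ 2 :=
    calc S.reApplyInnerSelf x - T.reApplyInnerSelf x
        = RCLike.re ⟪(S - T) x, x⟫_𝕜 := by simp [reApplyInnerSelf_apply, inner_sub_left]
      _ ≤ ‖(S - T) x‖ * ‖x‖ := re_inner_le_norm _ _
      _ ≤ ‖S - T‖ * ‖x‖ * ‖x‖ := by gcongr; exact (S - T).le_opNorm x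
      _ = ‖S - T‖ * ‖x‖ ^ 2 := by ring
  refine le_of_mul_le_mul_right ?_ (pow_pos (norm_pos_iff.mpr hx) 2)
  linarith [hα x hxU, hβ x hxW]

end Subspaces

section Eigenbasis

theorem Iic_eq_pair_of_covBy {α : Type*} [PartialOrder α] {i j : α} (hi : IsBot i) (hij : i ⋖ j) :
    Iic j = {i, j} := by
  rw [← hij.Icc_eq]
  exact Subset.antisymm (fun k hk => ⟨hi k, hk⟩) Icc_subset_Iic_self

theorem exists_orthonormalBasis_coe_eq {𝕜 E ι : Type*} [RCLike 𝕜] [NormedAddCommGroup E]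
    [InnerProductSpace 𝕜 E] [FiniteDimensional 𝕜 E] [Fintype ι] {v : ι → E}
    (hv : Orthonormal 𝕜 v) (hcard : finrank 𝕜 E = Fintype.card ι) :
    ∃ b : OrthonormalBasis ι 𝕜 E, ⇑b = v := by
  obtain ⟨b, hb⟩ := Orthonormal.exists_orthonormalBasis_extension_of_card_eq (s := univ) hcard
    (hv.comp _ Subtype.val_injective)
  exact ⟨b, funext fun k => hb k (mem_univ k)⟩

theorem inner_eq_zero_of_mem_span_image {𝕜 E ι : Type*} [RCLike 𝕜] [NormedAddCommGroup E]
    [InnerProductSpace 𝕜 E] {v : ι → E} (hv : Orthonormal 𝕜 v) {s : Set ι} {k : ι} (hk : k ∉ s)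
    {x : E} (hx : x ∈ span 𝕜 (v '' s)) : ⟪v k, x⟫_𝕜 = 0 := by
  suffices span 𝕜 (v '' s) ≤ (𝕜 ∙ v k)ᗮ from
    mem_orthogonal_singleton_iff_inner_right.mp (this hx)
  refine span_le.mpr ?_
  rintro _ ⟨l, hl, rfl⟩
  exact mem_orthogonal_singleton_iff_inner_right.mpr
    (hv.inner_eq_zero (ne_of_mem_of_not_mem hl hk).symm)

theorem finrank_span_image_eq_ncard {K V ι : Type*} [DivisionRing K] [AddCommGroup V] [Module K V]
    [Finite ι] {v : ι → V} (hv : LinearIndependent K v) (s : Set ι) :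
    finrank K (span K (v '' s)) = s.ncard := by
  have := Fintype.ofFinite s
  rw [← Subtype.range_coe (s := s), ← range_comp,
    finrank_span_eq_card (hv.comp ((↑) : s → ι) Subtype.val_injective),
    ← Nat.card_eq_fintype_card, Nat.card_coe_set_eq, Subtype.range_coe]

theorem apply_mem_span_image_of_eigenvectors {R M ι : Type*} [CommSemiring R] [AddCommMonoid M]
    [Module R M] {T : M →ₗ[R] M} {v : ι → M} {μ : ι → R} (hT : ∀ k, T (v k) = μ k • v k)
    (s : Set ι) : ∀ x ∈ span R (v '' s), T x ∈ span R (v '' s) := by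
  suffices span R (v '' s) ≤ (span R (v '' s)).comap T from this
  refine span_le.mpr ?_
  rintro _ ⟨k, hk, rfl⟩
  change T (v k) ∈ span R (v '' s)
  rw [hT]
  exact smul_mem _ _ (subset_span (mem_image_of_mem v hk))

variable {𝕜 E ι : Type*} [RCLike 𝕜] [NormedAddCommGroup E] [InnerProductSpace 𝕜 E] [Fintype ι]
  {S T : E →L[𝕜] E} {a b : OrthonormalBasis ι 𝕜 E} {μ ν : ι → ℝ}

theorem reApplyInnerSelf_eq_sum_of_eigenbasis (hS : ∀ k, S (a k) = (μ k : 𝕜) • a k) (x : E) :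
    S.reApplyInnerSelf x = ∑ k, μ k * ‖⟪a k, x⟫_𝕜‖ ^ 2 := by
  have hSx : S x = ∑ k, ⟪a k, x⟫_𝕜 • (μ k : 𝕜) • a k := by
    conv_lhs => rw [← a.sum_repr' x]
    simp only [map_sum, map_smul, hS]
  rw [reApplyInnerSelf_apply, hSx, sum_inner, map_sum]
  refine Finset.sum_congr rfl fun k _ => ?_
  rw [inner_smul_left, inner_smul_left, RCLike.conj_ofReal, mul_left_comm, RCLike.conj_mul]
  norm_cast

theorem mul_norm_sq_le_reApplyInnerSelf_of_mem_span (hS : ∀ k, S (a k) = (μ k : 𝕜) • a k)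
    {s : Set ι} {c : ℝ} (hc : ∀ k ∈ s, c ≤ μ k) :
    ∀ x ∈ span 𝕜 (a '' s), c * ‖x‖ ^ 2 ≤ S.reApplyInnerSelf x := by
  intro x hx
  rw [reApplyInnerSelf_eq_sum_of_eigenbasis hS, ← a.sum_sq_norm_inner_right x, Finset.mul_sum]
  refine Finset.sum_le_sum fun k _ => ?_
  by_cases hk : k ∈ s
  · gcongr
    exact hc k hk
  · simp [inner_eq_zero_of_mem_span_image a.orthonormal hk hx]

theorem reApplyInnerSelf_le_mul_norm_sq_of_mem_orthogonal_span
    (hS : ∀ k, S (a k) = (μ k : 𝕜) • a k) {s : Set ι} {c : ℝ} (hc : ∀ k ∉ s, μ k ≤ c) :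
    ∀ x ∈ (span 𝕜 (a '' s))ᗮ, S.reApplyInnerSelf x ≤ c * ‖x‖ ^ 2 := by
  intro x hx
  rw [reApplyInnerSelf_eq_sum_of_eigenbasis hS, ← a.sum_sq_norm_inner_right x, Finset.mul_sum]
  refine Finset.sum_le_sum fun k _ => ?_
  by_cases hk : k ∈ s
  · simp [inner_right_of_mem_orthogonal (subset_span (mem_image_of_mem a hk)) hx]
  · gcongr
    exact hc k hk

variable [LinearOrder ι]

theorem eigenvalue_sub_eigenvalue_le_norm_sub (hμ : Antitone μ) (hν : Antitone ν)
    (hS : ∀ k, S (a k) = (μ k : 𝕜) • a k) (hT : ∀ k, T (b k) = (ν k : 𝕜) • b k) (i : ι) :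
    μ i - ν i ≤ ‖S - T‖ := by
  have := a.toBasis.finiteDimensional_of_finite
  refine sub_le_norm_sub_of_finrank_lt (U := span 𝕜 (a '' Iic i)) (W := span 𝕜 (b '' Iio i))
    (mul_norm_sq_le_reApplyInnerSelf_of_mem_span hS fun k hk => hμ hk)
    (reApplyInnerSelf_le_mul_norm_sq_of_mem_orthogonal_span hT fun k hk => hν (not_lt.mp hk)) ?_
  rw [finrank_span_image_eq_ncard a.orthonormal.linearIndependent,
    finrank_span_image_eq_ncard b.orthonormal.linearIndependent]
  exact ncard_lt_ncard Iio_ssubset_Iic_self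

theorem davis_kahan_top_two_general [FiniteDimensional 𝕜 E] (hμ : Antitone μ) (hν : Antitone ν)
    (hS : ∀ k, S (a k) = (μ k : 𝕜) • a k) (hT : ∀ k, T (b k) = (ν k : 𝕜) • b k)
    {i j : ι} (hij : i ⋖ j) (hgap : 0 < μ i - μ j - ‖S - T‖) :
    ‖(ContinuousLinearMap.id 𝕜 E - (span 𝕜 (a '' Iic i)).starProjection) ∘L
        (span 𝕜 (b '' Iic i)).starProjection‖ ≤
      ‖S - T‖ / (μ i - μ j - ‖S - T‖) := by
  have := FiniteDimensional.complete 𝕜 E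
  have hweyl : μ i - ν i ≤ ‖S - T‖ := eigenvalue_sub_eigenvalue_le_norm_sub hμ hν hS hT i
  have hsin := sub_mul_norm_starProjection_comp_starProjection_le
    (apply_mem_span_image_of_eigenvectors (T := (S : E →ₗ[𝕜] E)) hS (Iic i))
    (apply_mem_span_image_of_eigenvectors (T := (T : E →ₗ[𝕜] E)) hT (Iic i))
    (mul_norm_sq_le_reApplyInnerSelf_of_mem_span hT fun k hk => hν hk)
    (reApplyInnerSelf_le_mul_norm_sq_of_mem_orthogonal_span hS
      fun k hk => hμ (hij.ge_of_gt (not_le.mp hk)))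
  rw [← starProjection_orthogonal, le_div_iff₀' hgap]
  exact (mul_le_mul_of_nonneg_right (by linarith) (norm_nonneg _)).trans hsin

end Eigenbasis

/-- Combined Davis–Kahan / Weyl perturbation bound for the top-2 eigenspaces of two real
symmetric matrices: if `λ₂(A) − |λ₃(A)| − ‖A − B‖₂ > 0`, then
`‖(I − P_A) P_B‖₂ ≤ ‖A − B‖₂ / (λ₂(A) − |λ₃(A)| − ‖A − B‖₂)`, where `P_A`, `P_B` are the
orthogonal projections onto the spans of the eigenvectors of the top 2 eigenvalues. -/
theorem davis_kahan_top_two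
    (d : ℕ) (hd : 3 ≤ d)
    (A B : Matrix (Fin d) (Fin d) ℝ) (hA : A.IsHermitian) (hB : B.IsHermitian)
    (μA μB : Fin d → ℝ) (hμA : Antitone μA) (hμB : Antitone μB)
    (vA vB : Fin d → EuclideanSpace ℝ (Fin d))
    (hvA : Orthonormal ℝ vA) (hvB : Orthonormal ℝ vB)
    (heA : ∀ i, Matrix.toEuclideanLin A (vA i) = μA i • vA i)
    (heB : ∀ i, Matrix.toEuclideanLin B (vB i) = μB i • vB i)
    (PA PB : EuclideanSpace ℝ (Fin d) →L[ℝ] EuclideanSpace ℝ (Fin d))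
    (hPA : PA = (Submodule.span ℝ {vA ⟨0, by omega⟩, vA ⟨1, by omega⟩}).subtypeL.comp
      (Submodule.orthogonalProjectionOnto (Submodule.span ℝ {vA ⟨0, by omega⟩, vA ⟨1, by omega⟩})))
    (hPB : PB = (Submodule.span ℝ {vB ⟨0, by omega⟩, vB ⟨1, by omega⟩}).subtypeL.comp
      (Submodule.orthogonalProjectionOnto (Submodule.span ℝ {vB ⟨0, by omega⟩, vB ⟨1, by omega⟩})))
    (hgap : 0 < μA ⟨1, by omega⟩ - |μA ⟨2, by omega⟩| - ‖A - B‖) :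
    ‖(ContinuousLinearMap.id ℝ (EuclideanSpace ℝ (Fin d)) - PA).comp PB‖ ≤
      ‖A - B‖ / (μA ⟨1, by omega⟩ - |μA ⟨2, by omega⟩| - ‖A - B‖) := by
  obtain ⟨a, rfl⟩ := exists_orthonormalBasis_coe_eq hvA finrank_euclideanSpace
  obtain ⟨b, rfl⟩ := exists_orthonormalBasis_coe_eq hvB finrank_euclideanSpace
  have htop : Iic (⟨1, by omega⟩ : Fin d) = {⟨0, by omega⟩, ⟨1, by omega⟩} :=
    Iic_eq_pair_of_covBy (fun _ => Nat.zero_le _) (by simp [Fin.covBy_iff])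
  have hnorm : ‖toEuclideanCLM (𝕜 := ℝ) A - toEuclideanCLM (𝕜 := ℝ) B‖ = ‖A - B‖ := by
    rw [← map_sub, l2_opNorm_toEuclideanCLM]
  have habs := le_abs_self (μA ⟨2, by omega⟩)
  have hgeneral := davis_kahan_top_two_general hμA hμB (S := toEuclideanCLM (𝕜 := ℝ) A)
    (T := toEuclideanCLM (𝕜 := ℝ) B) heA heB (i := ⟨1, by omega⟩) (j := ⟨2, by omega⟩)
    (by simp [Fin.covBy_iff]) (by rw [hnorm]; linarith)
  rw [htop, image_pair, image_pair, hnorm] at hgeneral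
  subst hPA hPB
  exact hgeneral.trans (by gcongr)
end

section
/- Let m, k ≥ 2, let a, b be indices with a + 1 < m and b + 1 < k, and set i = (a, b), j = (a, b+1), and κ = (a+1, b+1) in the m×k grid graph on Fin m × Fin k. Let G' be the graph obtained from the grid graph by deleting the single edge {i, j}. Then in G' the graph distance from i to κ equals 2, while the graph distance from i to j equals 3. In particular, the vertex i is strictly closer in G' to its diagonal neighbor κ than to its true grid neighbor j. -/
/-- The m×k grid graph on `Fin m × Fin k`: two vertices are adjacent iff they agree in one
coordinate and differ by exactly 1 in the other. -/
def gridGraph (m k : ℕ) : SimpleGraph (Fin m × Fin k) where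
  Adj u v := (u.1 = v.1 ∧ Nat.dist u.2.1 v.2.1 = 1) ∨ (u.2 = v.2 ∧ Nat.dist u.1.1 v.1.1 = 1)
  symm := by
    constructor
    intro u v h
    rcases h with ⟨h1, h2⟩ | ⟨h1, h2⟩
    · exact Or.inl ⟨h1.symm, by rwa [Nat.dist_comm]⟩
    · exact Or.inr ⟨h1.symm, by rwa [Nat.dist_comm]⟩
  loopless := by
    constructor
    intro u h
    rcases h with ⟨_, h2⟩ | ⟨_, h2⟩ <;> simp [Nat.dist_self] at h2

/-!
In a bipartite graph all walks between two given vertices have lengths of the same parity. In the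
grid, the unit square through `i`, `(a + 1, b)`, `κ`, `j` still contains a walk of length 2 from `i`
to `κ` and one of length 3 from `i` to `j` after the edge between `i` and `j` is deleted. Parity
leaves only the lengths 0 and 2, respectively 1 and 3, for a shortest walk; the smaller values are
impossible because `i ≠ κ` and because the edge between `i` and `j` is gone.
-/

section Bipartite

variable {V : Type*} {G : SimpleGraph V} {u v w x : V}

lemma even_length_iff_of_isBipartite (hG : G.IsBipartite) (p q : G.Walk u v) :
    Even p.length ↔ Even q.length := by
  have hclosed : Even (p.append q.reverse).length :=
    SimpleGraph.two_colorable_iff_forall_loop_even.mp hG u _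
  rwa [SimpleGraph.Walk.length_append, SimpleGraph.Walk.length_reverse, Nat.even_add] at hclosed

lemma even_dist_iff_of_isBipartite (hG : G.IsBipartite) (p : G.Walk u v) :
    Even (G.dist u v) ↔ Even p.length := by
  obtain ⟨q, hq⟩ := p.reachable.exists_walk_length_eq_dist
  exact hq ▸ even_length_iff_of_isBipartite hG q p

lemma dist_eq_two_of_isBipartite (hG : G.IsBipartite) (p : G.Walk u v) (hp : p.length = 2)
    (hne : u ≠ v) : G.dist u v = 2 := by
  have hle : G.dist u v ≤ 2 := hp ▸ SimpleGraph.dist_le p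
  have hpos : 0 < G.dist u v := p.reachable.pos_dist_of_ne hne
  have heven : Even (G.dist u v) := (even_dist_iff_of_isBipartite hG p).mpr (hp ▸ even_two)
  grind

lemma dist_eq_three_of_isBipartite (hG : G.IsBipartite) (p : G.Walk u v) (hp : p.length = 3)
    (hnadj : ¬G.Adj u v) : G.dist u v = 3 := by
  have hle : G.dist u v ≤ 3 := hp ▸ SimpleGraph.dist_le p
  have hne_one : G.dist u v ≠ 1 := mt SimpleGraph.dist_eq_one_iff_adj.mp hnadj
  have hodd : ¬Even (G.dist u v) := by
    rw [even_dist_iff_of_isBipartite hG p, hp]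
    decide
  grind

lemma adj_deleteEdges_singleton_of_ne_of_ne (h : G.Adj v w) (hvu : v ≠ u) (hvx : v ≠ x) :
    (G.deleteEdges {s(u, x)}).Adj v w := by
  simp [h, hvu, hvx]

lemma isBipartite_deleteEdges (hG : G.IsBipartite) (s : Set (Sym2 V)) :
    (G.deleteEdges s).IsBipartite :=
  hG.mono_left (G.deleteEdges_le s)

lemma dist_deleteEdges_eq_two_of_isBipartite (hG : G.IsBipartite) (huv : G.Adj u v)
    (hvw : G.Adj v w) (huw : u ≠ w) (hvx : v ≠ x) :
    (G.deleteEdges {s(u, x)}).dist u w = 2 :=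
  have huv' := (adj_deleteEdges_singleton_of_ne_of_ne huv.symm huv.ne' hvx).symm
  have hvw' := adj_deleteEdges_singleton_of_ne_of_ne hvw huv.ne' hvx
  dist_eq_two_of_isBipartite (isBipartite_deleteEdges hG _) (.cons huv' (.cons hvw' .nil)) rfl huw

lemma dist_deleteEdges_eq_three_of_isBipartite (hG : G.IsBipartite) (huv : G.Adj u v)
    (hvw : G.Adj v w) (hwx : G.Adj w x) (huw : u ≠ w) (hvx : v ≠ x) :
    (G.deleteEdges {s(u, x)}).dist u x = 3 :=
  have huv' := (adj_deleteEdges_singleton_of_ne_of_ne huv.symm huv.ne' hvx).symm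
  have hvw' := adj_deleteEdges_singleton_of_ne_of_ne hvw huv.ne' hvx
  have hwx' := adj_deleteEdges_singleton_of_ne_of_ne hwx huw.symm hwx.ne
  dist_eq_three_of_isBipartite (isBipartite_deleteEdges hG _)
    (.cons huv' (.cons hvw' (.cons hwx' .nil))) rfl (by simp)

end Bipartite

section Grid

variable {m k : ℕ}

lemma gridGraph_adj_left {r r' : Fin m} {c : Fin k} :
    (gridGraph m k).Adj (r, c) (r', c) ↔ Nat.dist r r' = 1 := by
  simp [gridGraph]

lemma gridGraph_adj_right {r : Fin m} {c c' : Fin k} :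
    (gridGraph m k).Adj (r, c) (r, c') ↔ Nat.dist c c' = 1 := by
  simp [gridGraph]

lemma natDist_add_eq_one_of_gridGraph_adj {u v : Fin m × Fin k} (h : (gridGraph m k).Adj u v) :
    Nat.dist (u.1 + u.2) (v.1 + v.2) = 1 := by
  rcases h with ⟨hrow, hcol⟩ | ⟨hcol, hrow⟩
  · rwa [hrow, Nat.dist_add_add_left]
  · rwa [hcol, Nat.dist_add_add_right]

lemma gridGraph_isBipartite (m k : ℕ) : (gridGraph m k).IsBipartite := by
  let parity (u : Fin m × Fin k) : Bool := decide (Even (u.1 + u.2 : ℕ))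
  have hparity {u v : Fin m × Fin k} (h : (gridGraph m k).Adj u v) : parity u ≠ parity v := by
    have hsum := natDist_add_eq_one_of_gridGraph_adj h
    grind [Nat.dist]
  exact (SimpleGraph.Coloring.mk parity hparity).colorable

end Grid

/-- In the m×k grid graph with the single edge between `i = (a,b)` and `j = (a,b+1)` deleted,
the graph distance from `i` to the diagonal neighbor `κ = (a+1,b+1)` is 2 while the distance
from `i` to its true grid neighbor `j` is 3; in particular `i` is strictly closer to `κ`
than to `j`. -/
theorem grid_deleteEdge_dist
    (m k a b : ℕ) (hm : 2 ≤ m) (hk : 2 ≤ k) (ha : a + 1 < m) (hb : b + 1 < k)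
    (i j κ : Fin m × Fin k)
    (hi : i = (⟨a, by omega⟩, ⟨b, by omega⟩))
    (hj : j = (⟨a, by omega⟩, ⟨b + 1, by omega⟩))
    (hκ : κ = (⟨a + 1, by omega⟩, ⟨b + 1, by omega⟩))
    (G' : SimpleGraph (Fin m × Fin k))
    (hG' : G' = (gridGraph m k).deleteEdges {s(i, j)}) :
    G'.dist i κ = 2 ∧ G'.dist i j = 3 ∧ G'.dist i κ < G'.dist i j := by
  let c : Fin m × Fin k := (⟨a + 1, ha⟩, ⟨b, by omega⟩)
  have hic : (gridGraph m k).Adj i c := hi ▸ gridGraph_adj_left.mpr (by simp [Nat.dist])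
  have hcκ : (gridGraph m k).Adj c κ := hκ ▸ gridGraph_adj_right.mpr (by simp [Nat.dist])
  have hκj : (gridGraph m k).Adj κ j := hκ ▸ hj ▸ gridGraph_adj_left.mpr (by simp [Nat.dist])
  have hiκ : i ≠ κ := by simp [hi, hκ]
  have hcj : c ≠ j := by simp [c, hj]
  have hbip := gridGraph_isBipartite m k
  have htwo : G'.dist i κ = 2 :=
    hG' ▸ dist_deleteEdges_eq_two_of_isBipartite hbip hic hcκ hiκ hcj
  have hthree : G'.dist i j = 3 :=
    hG' ▸ dist_deleteEdges_eq_three_of_isBipartite hbip hic hcκ hκj hiκ hcj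
  exact ⟨htwo, hthree, by omega⟩
end
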